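/- For all real a > 0 and b > 0, ∫₀^∞ x^{-3/2} · exp(−(a·x + b/x)/2) dx = √(2π/b) · exp(−√(a·b)). (This is the normalization identity for the Inverse-Gaussian distribution, equivalently the GIG distribution with index p = −1/2, used to integrate out the latent scales in the scale-mixture representation.) -/

import Mathlib

open MeasureTheory Real Set

lemma aux_phi_image (α β : ℝ) (hα : 0 < α) (hβ : 0 < β) :
    (fun u : ℝ => β * u - α / u) '' Ioi 0 = univ := by
  ext t
  simp only [mem_image, mem_Ioi, mem_univ, iff_true]
  have h0 : 0 ≤ t ^ 2 + 4 * α * β := by positivity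
  have hs := Real.sq_sqrt h0
  have hlt : |t| < √(t ^ 2 + 4 * α * β) := by
    rw [← Real.sqrt_sq_eq_abs]
    apply Real.sqrt_lt_sqrt (sq_nonneg t)
    have : 0 < α * β := by positivity
    linarith
  have hp : 0 < t + √(t ^ 2 + 4 * α * β) := by
    have := neg_abs_le t
    linarith
  set s := √(t ^ 2 + 4 * α * β)
  refine ⟨(t + s) / (2 * β), by positivity, ?_⟩
  have : t + s ≠ 0 := hp.ne'
  field_simp
  nlinarith

lemma aux_phi_inj (α β : ℝ) (hα : 0 < α) (hβ : 0 < β) :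
    InjOn (fun u : ℝ => β * u - α / u) (Ioi 0) := by
  have : StrictMonoOn (fun u : ℝ => β * u - α / u) (Ioi 0) := by
    intro x hx y hy hxy
    simp only [mem_Ioi] at hx hy
    have h1 : β * x < β * y := by gcongr
    have h2 : α / y < α / x := by gcongr
    show β * x - α / x < β * y - α / y
    linarith
  exact this.injOn

lemma aux_main (α β : ℝ) (hα : 0 < α) (hβ : 0 < β) :
    2 * β * ∫ u in Ioi (0 : ℝ), exp (-(1 / 2) * (β * u - α / u) ^ 2) = √(2 * π) := by
  have hd : ∀ u ∈ Ioi (0 : ℝ), HasDerivWithinAt (fun u : ℝ => β * u - α / u)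
      (β + α / u ^ 2) (Ioi 0) u := by
    intro u hu
    have hu' : u ≠ 0 := (mem_Ioi.1 hu).ne'
    have h := ((hasDerivAt_id u).const_mul β).sub ((hasDerivAt_inv hu').const_mul α)
    refine (h.congr_deriv ?_).hasDerivWithinAt
    field_simp
    ring
  have hpos : ∀ u ∈ Ioi (0 : ℝ), |β + α / u ^ 2| = β + α / u ^ 2 := by
    intro u hu
    exact abs_of_pos (by positivity)
  have e1 := integral_image_eq_integral_abs_deriv_smul measurableSet_Ioi hd
    (aux_phi_inj α β hα hβ) (fun t => exp (-(1 / 2) * t ^ 2))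
  have i1 := (integrableOn_image_iff_integrableOn_abs_deriv_smul measurableSet_Ioi hd
    (aux_phi_inj α β hα hβ) (fun t => exp (-(1 / 2) * t ^ 2)))
  rw [aux_phi_image α β hα hβ] at e1 i1
  have i2 := i1.1 (integrable_exp_neg_mul_sq (by norm_num : (0 : ℝ) < 1 / 2)).integrableOn
  rw [setIntegral_univ, integral_gaussian] at e1
  have iA : IntegrableOn (fun u : ℝ => β * exp (-(1 / 2) * (β * u - α / u) ^ 2)) (Ioi 0) := by
    refine Integrable.mono i2 (by fun_prop) ?_
    filter_upwards [ae_restrict_mem measurableSet_Ioi] with u hu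
    rw [hpos u hu, smul_eq_mul, norm_mul, norm_mul]
    gcongr
    rw [norm_of_nonneg hβ.le, norm_of_nonneg (by positivity)]
    have : 0 ≤ α / u ^ 2 := by positivity
    linarith
  have iB : IntegrableOn (fun u : ℝ => α / u ^ 2 * exp (-(1 / 2) * (β * u - α / u) ^ 2))
      (Ioi 0) := by
    refine Integrable.mono i2 (by fun_prop) ?_
    filter_upwards [ae_restrict_mem measurableSet_Ioi] with u hu
    rw [hpos u hu, smul_eq_mul, norm_mul, norm_mul]
    gcongr
    rw [norm_of_nonneg (by positivity), norm_of_nonneg (by positivity)]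
    linarith
  have e2 : √(π / (1 / 2)) = (∫ u in Ioi (0 : ℝ), β * exp (-(1 / 2) * (β * u - α / u) ^ 2))
      + ∫ u in Ioi (0 : ℝ), α / u ^ 2 * exp (-(1 / 2) * (β * u - α / u) ^ 2) := by
    rw [← integral_add iA iB, e1]
    refine setIntegral_congr_fun measurableSet_Ioi fun u hu => ?_
    simp only [hpos u hu, smul_eq_mul]
    ring
  have hd2 : ∀ u ∈ Ioi (0 : ℝ), HasDerivWithinAt (fun u : ℝ => α / β / u)
      (-(α / β / u ^ 2)) (Ioi 0) u := by
    intro u hu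
    have hu' : u ≠ 0 := (mem_Ioi.1 hu).ne'
    have h := (hasDerivAt_inv hu').const_mul (α / β)
    refine (h.congr_deriv ?_).hasDerivWithinAt
    field_simp
  have him : (fun u : ℝ => α / β / u) '' Ioi 0 = Ioi 0 := by
    ext t
    simp only [mem_image, mem_Ioi]
    constructor
    · rintro ⟨u, hu, rfl⟩
      positivity
    · intro ht
      refine ⟨α / β / t, by positivity, ?_⟩
      field_simp
  have hinj : InjOn (fun u : ℝ => α / β / u) (Ioi 0) := by
    intro x hx y hy hxy
    simp only [mem_Ioi] at hx hy hxy
    field_simp at hxy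
    linarith
  have e3 := integral_image_eq_integral_abs_deriv_smul measurableSet_Ioi hd2 hinj
    (fun u => β * exp (-(1 / 2) * (β * u - α / u) ^ 2))
  rw [him] at e3
  have e4 : (∫ u in Ioi (0 : ℝ), α / u ^ 2 * exp (-(1 / 2) * (β * u - α / u) ^ 2))
      = ∫ u in Ioi (0 : ℝ), β * exp (-(1 / 2) * (β * u - α / u) ^ 2) := by
    rw [e3]
    refine setIntegral_congr_fun measurableSet_Ioi fun u hu => ?_
    have hu : 0 < u := hu
    have h1 : |(-(α / β / u ^ 2))| = α / β / u ^ 2 := by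
      rw [abs_neg, abs_of_pos (by positivity)]
    have h2 : β * (α / β / u) - α / (α / β / u) = -(β * u - α / u) := by
      field_simp
      ring
    simp only [h1, h2, smul_eq_mul, neg_sq]
    field_simp
  rw [e4, integral_const_mul] at e2
  have : π / (1 / 2) = 2 * π := by ring
  rw [this] at e2
  rw [e2]
  ring

/-- The normalization identity for the Inverse-Gaussian distribution
(the `GIG` distribution with index `p = -1/2`): for all `a, b > 0`,
`∫₀^∞ x^(-3/2) exp(-(a x + b / x)/2) dx = √(2π/b) · exp(-√(a b))`. -/
theorem invGaussian_normalization (a b : ℝ) (ha : 0 < a) (hb : 0 < b) :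
    (∫ x in Ioi (0 : ℝ), x ^ (-(3 : ℝ) / 2) * Real.exp (-(a * x + b / x) / 2))
      = Real.sqrt (2 * π / b) * Real.exp (-Real.sqrt (a * b)) := by
  have hα := Real.sqrt_pos.2 ha
  have hβ := Real.sqrt_pos.2 hb
  have hm := aux_main (√a) (√b) hα hβ
  rw [← integral_comp_rpow_Ioi _ (by norm_num : (-2 : ℝ) ≠ 0), Real.sqrt_div' _ hb.le, ← hm,
    Real.sqrt_mul ha.le]
  have : 2 * √b * (∫ u in Ioi (0 : ℝ), exp (-(1 / 2) * (√b * u - √a / u) ^ 2)) / √b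
      * exp (-(√a * √b)) = ∫ u in Ioi (0 : ℝ), 2 * exp (-(√a * √b)) *
        exp (-(1 / 2) * (√b * u - √a / u) ^ 2) := by
    rw [integral_const_mul]
    field_simp
  rw [this]
  refine setIntegral_congr_fun measurableSet_Ioi fun u hu => ?_
  have hu : 0 < u := hu
  have h1 : (u ^ (-2 : ℝ)) ^ (-(3 : ℝ) / 2) = u ^ (3 : ℝ) := by
    rw [← Real.rpow_mul hu.le]
    norm_num
  have h2 : u ^ (-2 - 1 : ℝ) * u ^ (3 : ℝ) = 1 := by
    rw [← Real.rpow_add hu]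
    norm_num
  have h3 : u ^ (-2 : ℝ) = 1 / u ^ 2 := by
    rw [Real.rpow_neg hu.le]
    norm_num
  have h4 : -(a * (1 / u ^ 2) + b / (1 / u ^ 2)) / 2
      = -(√a * √b) + -(1 / 2) * (√b * u - √a / u) ^ 2 := by
    have hA := Real.sq_sqrt ha.le
    have hB := Real.sq_sqrt hb.le
    nth_rewrite 1 [← hA, ← hB]
    field_simp
    ring
  simp only [h1, smul_eq_mul]
  rw [h3, h4, Real.exp_add, abs_neg, abs_two]
  linear_combination (2 * exp (-(√a * √b)) * exp (-(1 / 2) * (√b * u - √a / u) ^ 2)) * h2
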